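/- Let M₁, M₂ be ω-saturated Θ-models, let t ∈ U₁ and t' ∈ U₂ be such that tp_x(M₁,t) ⊆ tp_x(M₂,t') (types taken with respect to (2,1)-standard x-translations), and let x be a variable. Define A = {(a,b) : for some p,q with {p,q} = {1,2}, a ∈ U_p, b ∈ U_q and tp_x(M_p,a) ⊆ tp_x(M_q,b)}. Then A is a (2,1)-modal ⟨(M₁,t),(M₂,t')⟩-asimulation. -/

import Mathlib

namespace ModalIntAsim

/-- Binary relation symbols of the correspondence vocabulary: R, R_□, R_◇. -/
inductive RelSym : Type
  | r | box | diam
deriving DecidableEq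

/-- Formulas of the correspondence language: classical first-order logic without
identity, with variables indexed by `ℕ`, unary predicate letters `P n` (n : ℕ),
and the three binary relation symbols. -/
inductive FOForm : Type
  | falsum : FOForm
  | pred : ℕ → ℕ → FOForm            -- `pred n v` is `P_n(x_v)`
  | rel : RelSym → ℕ → ℕ → FOForm    -- `rel s v w` is `S(x_v, x_w)`
  | conj : FOForm → FOForm → FOForm
  | disj : FOForm → FOForm → FOForm
  | impl : FOForm → FOForm → FOForm
  | all : ℕ → FOForm → FOForm
  | ex : ℕ → FOForm → FOForm

namespace FOForm

/-- Free variables of a correspondence formula. -/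
def freeVars : FOForm → Finset ℕ
  | falsum => ∅
  | pred _ v => {v}
  | rel _ v w => {v, w}
  | conj f g => f.freeVars ∪ g.freeVars
  | disj f g => f.freeVars ∪ g.freeVars
  | impl f g => f.freeVars ∪ g.freeVars
  | all v f => f.freeVars \ {v}
  | ex v f => f.freeVars \ {v}

/-- The unary predicate letters occurring in a formula (the binary relation
symbols R, R_□, R_◇ are regarded as belonging to every vocabulary Σ_φ). -/
def predLetters : FOForm → Finset ℕ
  | falsum => ∅
  | pred n _ => {n}
  | rel _ _ _ => ∅
  | conj f g => f.predLetters ∪ g.predLetters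
  | disj f g => f.predLetters ∪ g.predLetters
  | impl f g => f.predLetters ∪ g.predLetters
  | all _ f => f.predLetters
  | ex _ f => f.predLetters

/-- Degree of a formula: the greatest number of nested quantifiers. -/
def degree : FOForm → ℕ
  | falsum => 0
  | pred _ _ => 0
  | rel _ _ _ => 0
  | conj f g => max f.degree g.degree
  | disj f g => max f.degree g.degree
  | impl f g => max f.degree g.degree
  | all _ f => f.degree + 1
  | ex _ f => f.degree + 1

end FOForm

/-- A model of the correspondence language: a domain together with
interpretations of R, R_□, R_◇ and of the unary predicate letters.
(A Θ-model only consults the letters in Θ.) -/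
structure Model : Type 1 where
  U : Type
  rel : U → U → Prop
  relBox : U → U → Prop
  relDiam : U → U → Prop
  pred : ℕ → U → Prop

/-- Interpretation of a binary relation symbol in a model. -/
def Model.relOf (M : Model) : RelSym → M.U → M.U → Prop
  | .r => M.rel
  | .box => M.relBox
  | .diam => M.relDiam

/-- Tarskian satisfaction of a formula in a model under an assignment. -/
def Sat (M : Model) : FOForm → (ℕ → M.U) → Prop
  | .falsum, _ => False
  | .pred n v, α => M.pred n (α v)
  | .rel s v w, α => M.relOf s (α v) (α w)
  | .conj f g, α => Sat M f α ∧ Sat M g α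
  | .disj f g, α => Sat M f α ∨ Sat M g α
  | .impl f g, α => Sat M f α → Sat M g α
  | .all v f, α => ∀ u : M.U, Sat M f (Function.update α v u)
  | .ex v f, α => ∃ u : M.U, Sat M f (Function.update α v u)

/-- `M, a ⊨ φ(x)`: φ is true in `M` under any assignment sending `x` to `a`. -/
def SatAt (M : Model) (a : M.U) (x : ℕ) (φ : FOForm) : Prop :=
  ∀ α : ℕ → M.U, α x = a → Sat M φ α

/-- Logical equivalence of correspondence formulas. -/
def Equiv (φ ψ : FOForm) : Prop :=
  ∀ (M : Model) (α : ℕ → M.U), Sat M φ α ↔ Sat M ψ α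

/-- Logical entailment between correspondence formulas. -/
def Entails (φ ψ : FOForm) : Prop :=
  ∀ (M : Model) (α : ℕ → M.U), Sat M φ α → Sat M ψ α

/-- Modal intuitionistic formulas: built from propositional letters `p n`
using ⊥, ∧, ∨, →, □, ◇. -/
inductive MForm : Type
  | bot : MForm
  | prop : ℕ → MForm
  | conj : MForm → MForm → MForm
  | disj : MForm → MForm → MForm
  | impl : MForm → MForm → MForm
  | box : MForm → MForm
  | diam : MForm → MForm

/-- The (i,j)-standard x-translation `ST_ij`.  `boxOne = true` means the box
clause (□₁) is used (i = 1), `boxOne = false` means (□₂) (i = 2); likewise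
`diamOne = true` means the diamond clause (◇₁) (j = 1) and `diamOne = false`
means (◇₂) (j = 2).  Bound variables are chosen fresh as `x+1`, `x+2`. -/
def ST (boxOne diamOne : Bool) : MForm → ℕ → FOForm
  | .bot, _ => .falsum
  | .prop n, x => .pred n x
  | .conj I J, x => .conj (ST boxOne diamOne I x) (ST boxOne diamOne J x)
  | .disj I J, x => .disj (ST boxOne diamOne I x) (ST boxOne diamOne J x)
  | .impl I J, x =>
      .all (x + 1) (.impl (.rel .r x (x + 1))
        (.impl (ST boxOne diamOne I (x + 1)) (ST boxOne diamOne J (x + 1))))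
  | .box I, x =>
      if boxOne then
        .all (x + 1) (.impl (.rel .box x (x + 1)) (ST boxOne diamOne I (x + 1)))
      else
        .all (x + 1) (.impl (.rel .r x (x + 1))
          (.all (x + 2) (.impl (.rel .box (x + 1) (x + 2)) (ST boxOne diamOne I (x + 2)))))
  | .diam I, x =>
      if diamOne then
        .ex (x + 1) (.conj (.rel .diam x (x + 1)) (ST boxOne diamOne I (x + 1)))
      else
        .all (x + 1) (.impl (.rel .r x (x + 1))
          (.ex (x + 2) (.conj (.rel .diam (x + 1) (x + 2)) (ST boxOne diamOne I (x + 2)))))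

/-! ### Conditions on relations between tuples (the k-asimulation conditions).
A relation between the two models is represented by its two directed
components; `N` is the model of the source tuple and `P` that of the target
tuple.  A tuple `(ā_m, a)` is represented as the list `as ++ [a]`, with
`m = as.length`. -/

section TupleConds

variable (N P : Model)

/-- The "p-type" condition: related tuples are nonempty and of equal length. -/
def TypeCond (A : List N.U → List P.U → Prop) : Prop :=
  ∀ as bs, A as bs → as ≠ [] ∧ as.length = bs.length

/-- (p-base). -/
def BaseCond (Θ : Set ℕ) (A : List N.U → List P.U → Prop) : Prop :=
  ∀ (as : List N.U) (bs : List P.U) (a : N.U) (b : P.U),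
    A (as ++ [a]) (bs ++ [b]) → ∀ n ∈ Θ, N.pred n a → P.pred n b

/-- (p-step). -/
def StepCond (k : ℕ) (A : List N.U → List P.U → Prop)
    (Arev : List P.U → List N.U → Prop) : Prop :=
  ∀ (as : List N.U) (bs : List P.U) (a : N.U) (b d : P.U),
    A (as ++ [a]) (bs ++ [b]) → P.rel b d → as.length < k →
    ∃ c : N.U, N.rel a c ∧ A (as ++ [a, c]) (bs ++ [b, d]) ∧
      Arev (bs ++ [b, d]) (as ++ [a, c])

/-- (p-box-1). -/
def Box1Cond (k : ℕ) (A : List N.U → List P.U → Prop) : Prop :=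
  ∀ (as : List N.U) (bs : List P.U) (a : N.U) (b d : P.U),
    A (as ++ [a]) (bs ++ [b]) → P.relBox b d → as.length < k →
    ∃ c : N.U, N.relBox a c ∧ A (as ++ [a, c]) (bs ++ [b, d])

/-- (p-box-2). -/
def Box2Cond (k : ℕ) (A : List N.U → List P.U → Prop) : Prop :=
  ∀ (as : List N.U) (bs : List P.U) (a : N.U) (b d f : P.U),
    A (as ++ [a]) (bs ++ [b]) → P.rel b d → P.relBox d f → as.length + 1 < k →
    ∃ c e : N.U, N.rel a c ∧ N.relBox c e ∧ A (as ++ [a, c, e]) (bs ++ [b, d, f])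

/-- (p-diam-1). -/
def Diam1Cond (k : ℕ) (A : List N.U → List P.U → Prop) : Prop :=
  ∀ (as : List N.U) (bs : List P.U) (a c : N.U) (b : P.U),
    A (as ++ [a]) (bs ++ [b]) → N.relDiam a c → as.length < k →
    ∃ d : P.U, P.relDiam b d ∧ A (as ++ [a, c]) (bs ++ [b, d])

/-- (p-diam-2(1)). -/
def Diam2aCond (k : ℕ) (A B : List N.U → List P.U → Prop) : Prop :=
  ∀ (as : List N.U) (bs : List P.U) (a : N.U) (b d : P.U),
    A (as ++ [a]) (bs ++ [b]) → P.rel b d → as.length + 1 < k →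
    ∃ c : N.U, N.rel a c ∧ B (as ++ [a, c]) (bs ++ [b, d])

/-- (p-diam-2(2)). -/
def Diam2bCond (k : ℕ) (B A : List N.U → List P.U → Prop) : Prop :=
  ∀ (as : List N.U) (bs : List P.U) (a c : N.U) (b : P.U),
    B (as ++ [a]) (bs ++ [b]) → N.relDiam a c → as.length < k →
    ∃ d : P.U, P.relDiam b d ∧ A (as ++ [a, c]) (bs ++ [b, d])

end TupleConds

/-- An (i,1)-modal ⟨(M₁,t),(M₂,u)⟩_k-asimulation (j = 1): a single relation `A`
given by its two directed components `A12`, `A21`. -/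
def IsKAsimD1 (boxOne : Bool) (Θ : Set ℕ) (M₁ M₂ : Model) (t : M₁.U) (u : M₂.U) (k : ℕ)
    (A12 : List M₁.U → List M₂.U → Prop) (A21 : List M₂.U → List M₁.U → Prop) : Prop :=
  TypeCond M₁ M₂ A12 ∧ TypeCond M₂ M₁ A21 ∧
  A12 [t] [u] ∧
  BaseCond M₁ M₂ Θ A12 ∧ BaseCond M₂ M₁ Θ A21 ∧
  StepCond M₁ M₂ k A12 A21 ∧ StepCond M₂ M₁ k A21 A12 ∧
  (if boxOne then Box1Cond M₁ M₂ k A12 ∧ Box1Cond M₂ M₁ k A21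
   else Box2Cond M₁ M₂ k A12 ∧ Box2Cond M₂ M₁ k A21) ∧
  Diam1Cond M₁ M₂ k A12 ∧ Diam1Cond M₂ M₁ k A21

/-- An (i,2)-modal ⟨(M₁,t),(M₂,u)⟩_k-asimulation (j = 2): an ordered pair
(A, B) of relations, each given by its two directed components. -/
def IsKAsimD2 (boxOne : Bool) (Θ : Set ℕ) (M₁ M₂ : Model) (t : M₁.U) (u : M₂.U) (k : ℕ)
    (A12 : List M₁.U → List M₂.U → Prop) (A21 : List M₂.U → List M₁.U → Prop)
    (B12 : List M₁.U → List M₂.U → Prop) (B21 : List M₂.U → List M₁.U → Prop) : Prop :=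
  TypeCond M₁ M₂ A12 ∧ TypeCond M₂ M₁ A21 ∧
  TypeCond M₁ M₂ B12 ∧ TypeCond M₂ M₁ B21 ∧
  A12 [t] [u] ∧
  BaseCond M₁ M₂ Θ A12 ∧ BaseCond M₂ M₁ Θ A21 ∧
  StepCond M₁ M₂ k A12 A21 ∧ StepCond M₂ M₁ k A21 A12 ∧
  (if boxOne then Box1Cond M₁ M₂ k A12 ∧ Box1Cond M₂ M₁ k A21
   else Box2Cond M₁ M₂ k A12 ∧ Box2Cond M₂ M₁ k A21) ∧
  Diam2aCond M₁ M₂ k A12 B12 ∧ Diam2aCond M₂ M₁ k A21 B21 ∧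
  Diam2bCond M₁ M₂ k B12 A12 ∧ Diam2bCond M₂ M₁ k B21 A21

/-- φ(x) is invariant with respect to (i,1)-modal k-asimulations. -/
def KInvariantD1 (boxOne : Bool) (x : ℕ) (φ : FOForm) (k : ℕ) : Prop :=
  ∀ Θ : Set ℕ, (φ.predLetters : Set ℕ) ⊆ Θ →
  ∀ (M₁ M₂ : Model) (t : M₁.U) (u : M₂.U)
    (A12 : List M₁.U → List M₂.U → Prop) (A21 : List M₂.U → List M₁.U → Prop),
    IsKAsimD1 boxOne Θ M₁ M₂ t u k A12 A21 →
    ∀ (a : M₁.U) (b : M₂.U), A12 [a] [b] → SatAt M₁ a x φ → SatAt M₂ b x φ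

/-- φ(x) is invariant with respect to (i,2)-modal k-asimulations. -/
def KInvariantD2 (boxOne : Bool) (x : ℕ) (φ : FOForm) (k : ℕ) : Prop :=
  ∀ Θ : Set ℕ, (φ.predLetters : Set ℕ) ⊆ Θ →
  ∀ (M₁ M₂ : Model) (t : M₁.U) (u : M₂.U)
    (A12 : List M₁.U → List M₂.U → Prop) (A21 : List M₂.U → List M₁.U → Prop)
    (B12 : List M₁.U → List M₂.U → Prop) (B21 : List M₂.U → List M₁.U → Prop),
    IsKAsimD2 boxOne Θ M₁ M₂ t u k A12 A21 B12 B21 →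
    ∀ (a : M₁.U) (b : M₂.U), A12 [a] [b] → SatAt M₁ a x φ → SatAt M₂ b x φ

/-! ### Conditions for asimulations *simpliciter* (relations between elements). -/

section ElemConds

variable (N P : Model)

/-- (base). -/
def BaseCondE (Θ : Set ℕ) (A : N.U → P.U → Prop) : Prop :=
  ∀ (a : N.U) (b : P.U), A a b → ∀ n ∈ Θ, N.pred n a → P.pred n b

/-- (step). -/
def StepCondE (A : N.U → P.U → Prop) (Arev : P.U → N.U → Prop) : Prop :=
  ∀ (a : N.U) (b d : P.U), A a b → P.rel b d →
    ∃ c : N.U, N.rel a c ∧ A c d ∧ Arev d c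

/-- (box-1). -/
def Box1CondE (A : N.U → P.U → Prop) : Prop :=
  ∀ (a : N.U) (b d : P.U), A a b → P.relBox b d →
    ∃ c : N.U, N.relBox a c ∧ A c d

/-- (box-2). -/
def Box2CondE (A : N.U → P.U → Prop) : Prop :=
  ∀ (a : N.U) (b d f : P.U), A a b → P.rel b d → P.relBox d f →
    ∃ c e : N.U, N.rel a c ∧ N.relBox c e ∧ A e f

/-- (diam-1). -/
def Diam1CondE (A : N.U → P.U → Prop) : Prop :=
  ∀ (a c : N.U) (b : P.U), A a b → N.relDiam a c →
    ∃ d : P.U, P.relDiam b d ∧ A c d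

/-- (diam-2(1)). -/
def Diam2aCondE (A B : N.U → P.U → Prop) : Prop :=
  ∀ (a : N.U) (b d : P.U), A a b → P.rel b d →
    ∃ c : N.U, N.rel a c ∧ B c d

/-- (diam-2(2)). -/
def Diam2bCondE (B A : N.U → P.U → Prop) : Prop :=
  ∀ (a c : N.U) (b : P.U), B a b → N.relDiam a c →
    ∃ d : P.U, P.relDiam b d ∧ A c d

end ElemConds

/-- An (i,1)-modal ⟨(M₁,t),(M₂,u)⟩-asimulation (j = 1). -/
def IsAsimD1 (boxOne : Bool) (Θ : Set ℕ) (M₁ M₂ : Model) (t : M₁.U) (u : M₂.U)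
    (A12 : M₁.U → M₂.U → Prop) (A21 : M₂.U → M₁.U → Prop) : Prop :=
  A12 t u ∧
  BaseCondE M₁ M₂ Θ A12 ∧ BaseCondE M₂ M₁ Θ A21 ∧
  StepCondE M₁ M₂ A12 A21 ∧ StepCondE M₂ M₁ A21 A12 ∧
  (if boxOne then Box1CondE M₁ M₂ A12 ∧ Box1CondE M₂ M₁ A21
   else Box2CondE M₁ M₂ A12 ∧ Box2CondE M₂ M₁ A21) ∧
  Diam1CondE M₁ M₂ A12 ∧ Diam1CondE M₂ M₁ A21

/-- An (i,2)-modal ⟨(M₁,t),(M₂,u)⟩-asimulation (j = 2). -/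
def IsAsimD2 (boxOne : Bool) (Θ : Set ℕ) (M₁ M₂ : Model) (t : M₁.U) (u : M₂.U)
    (A12 : M₁.U → M₂.U → Prop) (A21 : M₂.U → M₁.U → Prop)
    (B12 : M₁.U → M₂.U → Prop) (B21 : M₂.U → M₁.U → Prop) : Prop :=
  A12 t u ∧
  BaseCondE M₁ M₂ Θ A12 ∧ BaseCondE M₂ M₁ Θ A21 ∧
  StepCondE M₁ M₂ A12 A21 ∧ StepCondE M₂ M₁ A21 A12 ∧
  (if boxOne then Box1CondE M₁ M₂ A12 ∧ Box1CondE M₂ M₁ A21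
   else Box2CondE M₁ M₂ A12 ∧ Box2CondE M₂ M₁ A21) ∧
  Diam2aCondE M₁ M₂ A12 B12 ∧ Diam2aCondE M₂ M₁ A21 B21 ∧
  Diam2bCondE M₁ M₂ B12 A12 ∧ Diam2bCondE M₂ M₁ B21 A21

/-- φ(x) is invariant with respect to (i,1)-modal asimulations. -/
def InvariantD1 (boxOne : Bool) (x : ℕ) (φ : FOForm) : Prop :=
  ∀ Θ : Set ℕ, (φ.predLetters : Set ℕ) ⊆ Θ →
  ∀ (M₁ M₂ : Model) (t : M₁.U) (u : M₂.U)
    (A12 : M₁.U → M₂.U → Prop) (A21 : M₂.U → M₁.U → Prop),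
    IsAsimD1 boxOne Θ M₁ M₂ t u A12 A21 →
    ∀ (a : M₁.U) (b : M₂.U), A12 a b → SatAt M₁ a x φ → SatAt M₂ b x φ

/-- φ(x) is invariant with respect to (i,2)-modal asimulations. -/
def InvariantD2 (boxOne : Bool) (x : ℕ) (φ : FOForm) : Prop :=
  ∀ Θ : Set ℕ, (φ.predLetters : Set ℕ) ⊆ Θ →
  ∀ (M₁ M₂ : Model) (t : M₁.U) (u : M₂.U)
    (A12 : M₁.U → M₂.U → Prop) (A21 : M₂.U → M₁.U → Prop)
    (B12 : M₁.U → M₂.U → Prop) (B21 : M₂.U → M₁.U → Prop),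
    IsAsimD2 boxOne Θ M₁ M₂ t u A12 A21 B12 B21 →
    ∀ (a : M₁.U) (b : M₂.U), A12 a b → SatAt M₁ a x φ → SatAt M₂ b x φ

/-! ### Types, complete conjunctions, ω-saturation. -/

/-- `int(φ,x,l)`: the set of (2,2)-standard x-translations of modal
intuitionistic formulas which are (Σ_φ,x,l)-formulas. -/
def intSet (φ : FOForm) (x l : ℕ) : Set FOForm :=
  {ψ | (∃ I : MForm, ψ = ST false false I x) ∧
    ψ.predLetters ⊆ φ.predLetters ∧ ψ.freeVars ⊆ {x} ∧ ψ.degree ≤ l}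

/-- `tp_l(φ(x),M,a)`. -/
def tpSet (φ : FOForm) (x l : ℕ) (M : Model) (a : M.U) : Set FOForm :=
  {ψ | ψ ∈ intSet φ x l ∧ SatAt M a x ψ}

/-- Conjunction of a nonempty list of formulas. -/
def listConj : FOForm → List FOForm → FOForm
  | ψ, [] => ψ
  | ψ, χ :: L => FOForm.conj ψ (listConj χ L)

/-- Ψ(x) is a complete (φ,x,k)-conjunction. -/
def IsCompleteConj (φ : FOForm) (x k : ℕ) (Ψ : FOForm) : Prop :=
  (∃ (ψ₀ : FOForm) (L : List FOForm), ψ₀ ∈ intSet φ x k ∧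
    (∀ χ ∈ L, χ ∈ intSet φ x k) ∧ Ψ = listConj ψ₀ L) ∧
  ∃ (M : Model) (a : M.U), SatAt M a x (FOForm.conj Ψ φ) ∧
    ∀ ψ ∈ tpSet φ x k M a, Entails Ψ ψ

/-- `int_x(Θ)` for the (i,j)-standard translation. -/
def intX (Θ : Set ℕ) (boxOne diamOne : Bool) (x : ℕ) : Set FOForm :=
  {ψ | (∃ I : MForm, ψ = ST boxOne diamOne I x) ∧ (ψ.predLetters : Set ℕ) ⊆ Θ}

/-- `tp_x(M,t)` for the (i,j)-standard translation. -/
def tpX (Θ : Set ℕ) (boxOne diamOne : Bool) (x : ℕ) (M : Model) (t : M.U) : Set FOForm :=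
  {ψ | ψ ∈ intX Θ boxOne diamOne x ∧ SatAt M t x ψ}

/-- `imp_x(M,t) = ⋂ { t̄p_x(M,u) : t R_◇ u }` (for the (2,2)-translation). -/
def impX (Θ : Set ℕ) (x : ℕ) (M : Model) (t : M.U) : Set FOForm :=
  {ψ | ψ ∈ intX Θ false false x ∧ ∀ u : M.U, M.relDiam t u → ¬ SatAt M u x ψ}

/-- ω-saturation: for every finite tuple of parameters (the first `n` values of
an assignment `α`) and every set `Γ` of formulas with finitely many free
variables beyond the parameters, if `Γ` is consistent with the first-order
theory of `[M,ā]` (i.e. satisfiable together with it in some model), then `Γ`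
is realized in `[M,ā]`. -/
def OmegaSaturated (M : Model) : Prop :=
  ∀ (n : ℕ) (α : ℕ → M.U) (Γ : Set FOForm),
    (∃ k : ℕ, ∀ γ ∈ Γ, γ.freeVars ⊆ Finset.range (n + k)) →
    (∃ (N : Model) (β : ℕ → N.U),
      (∀ ψ : FOForm, ψ.freeVars ⊆ Finset.range n → Sat M ψ α → Sat N ψ β) ∧
      ∀ γ ∈ Γ, Sat N γ β) →
    ∃ α' : ℕ → M.U, (∀ i < n, α' i = α i) ∧ ∀ γ ∈ Γ, Sat M γ α'

/-! ### Relativization to a class κ of models. -/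

/-- κ(Θ) is first-order axiomatizable for every finite Θ (with R ∈ Θ): for
every finite set `S` of unary predicate letters there is a set of Θ-sentences
axiomatizing membership in κ. -/
def FinAxiomatizable (κ : Set Model) : Prop :=
  ∀ S : Finset ℕ, ∃ Ax : Set FOForm,
    (∀ ψ ∈ Ax, ψ.freeVars = ∅ ∧ (ψ.predLetters : Set ℕ) ⊆ (S : Set ℕ)) ∧
    ∀ M : Model, M ∈ κ ↔ ∀ ψ ∈ Ax, ∀ α : ℕ → M.U, Sat M ψ α

/-- φ κ-follows from ψ: {ψ, ¬φ} is not κ-satisfiable. -/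
def KappaFollows (κ : Set Model) (ψ φ : FOForm) : Prop :=
  ¬ ∃ M : Model, M ∈ κ ∧ ∃ α : ℕ → M.U, Sat M ψ α ∧ ¬ Sat M φ α

/-- κ-equivalence of formulas. -/
def KappaEquiv (κ : Set Model) (φ ψ : FOForm) : Prop :=
  KappaFollows κ φ ψ ∧ KappaFollows κ ψ φ

/-- φ(x) is κ-invariant with respect to (i,1)-modal asimulations. -/
def KappaInvariantD1 (κ : Set Model) (boxOne : Bool) (x : ℕ) (φ : FOForm) : Prop :=
  ∀ Θ : Set ℕ, (φ.predLetters : Set ℕ) ⊆ Θ →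
  ∀ (M₁ M₂ : Model), M₁ ∈ κ → M₂ ∈ κ →
  ∀ (t : M₁.U) (u : M₂.U)
    (A12 : M₁.U → M₂.U → Prop) (A21 : M₂.U → M₁.U → Prop),
    IsAsimD1 boxOne Θ M₁ M₂ t u A12 A21 →
    ∀ (a : M₁.U) (b : M₂.U), A12 a b → SatAt M₁ a x φ → SatAt M₂ b x φ

/-- φ(x) is κ-invariant with respect to (i,2)-modal asimulations. -/
def KappaInvariantD2 (κ : Set Model) (boxOne : Bool) (x : ℕ) (φ : FOForm) : Prop :=
  ∀ Θ : Set ℕ, (φ.predLetters : Set ℕ) ⊆ Θ →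
  ∀ (M₁ M₂ : Model), M₁ ∈ κ → M₂ ∈ κ →
  ∀ (t : M₁.U) (u : M₂.U)
    (A12 : M₁.U → M₂.U → Prop) (A21 : M₂.U → M₁.U → Prop)
    (B12 : M₁.U → M₂.U → Prop) (B21 : M₂.U → M₁.U → Prop),
    IsAsimD2 boxOne Θ M₁ M₂ t u A12 A21 B12 B21 →
    ∀ (a : M₁.U) (b : M₂.U), A12 a b → SatAt M₁ a x φ → SatAt M₂ b x φ

/-- φ(x) is κ-invariant with respect to (i,j)-modal asimulations
(`diamOne = true` means j = 1). -/
def KappaInvariant (κ : Set Model) (boxOne diamOne : Bool) (x : ℕ) (φ : FOForm) : Prop :=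
  if diamOne then KappaInvariantD1 κ boxOne x φ else KappaInvariantD2 κ boxOne x φ


/-! ### Proof material -/

theorem sat_congr (M : Model) (φ : FOForm) :
    ∀ (α β : ℕ → M.U), (∀ v ∈ φ.freeVars, α v = β v) → (Sat M φ α ↔ Sat M φ β) := by
  induction φ with
  | falsum => intro α β _; simp [Sat]
  | pred n v => intro α β h; simp [Sat, h v (by simp [FOForm.freeVars])]
  | rel s v w =>
    intro α β h
    simp [Sat, h v (by simp [FOForm.freeVars]), h w (by simp [FOForm.freeVars])]
  | conj f g hf hg =>
    intro α β h
    simp only [FOForm.freeVars, Finset.mem_union] at h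
    simp only [Sat, hf α β (fun v hv => h v (.inl hv)), hg α β (fun v hv => h v (.inr hv))]
  | disj f g hf hg =>
    intro α β h
    simp only [FOForm.freeVars, Finset.mem_union] at h
    simp only [Sat, hf α β (fun v hv => h v (.inl hv)), hg α β (fun v hv => h v (.inr hv))]
  | impl f g hf hg =>
    intro α β h
    simp only [FOForm.freeVars, Finset.mem_union] at h
    simp only [Sat, hf α β (fun v hv => h v (.inl hv)), hg α β (fun v hv => h v (.inr hv))]
  | all v f hf =>
    intro α β h
    simp only [Sat]
    refine forall_congr' fun u => hf _ _ fun w hw => ?_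
    by_cases hwv : w = v
    · subst hwv; simp
    · simp [Function.update_of_ne hwv]
      exact h w (by simp [FOForm.freeVars, hw, hwv])
  | ex v f hf =>
    intro α β h
    simp only [Sat]
    refine exists_congr fun u => hf _ _ fun w hw => ?_
    by_cases hwv : w = v
    · subst hwv; simp
    · simp [Function.update_of_ne hwv]
      exact h w (by simp [FOForm.freeVars, hw, hwv])

/-- Ultrapower (identity-free, so no quotient is needed). -/
def upow (M : Model) {ι : Type} (l : Ultrafilter ι) : Model where
  U := ι → M.U
  rel f g := ∀ᶠ i in (l : Filter ι), M.rel (f i) (g i)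
  relBox f g := ∀ᶠ i in (l : Filter ι), M.relBox (f i) (g i)
  relDiam f g := ∀ᶠ i in (l : Filter ι), M.relDiam (f i) (g i)
  pred n f := ∀ᶠ i in (l : Filter ι), M.pred n (f i)

theorem update_eval {M : Model} {ι : Type} (α : ℕ → ι → M.U) (v : ℕ) (u : ι → M.U) (i : ι) :
    (fun w => Function.update α v u w i) = Function.update (fun w => α w i) v (u i) := by
  funext w
  by_cases h : w = v
  · subst h; simp
  · simp [Function.update_of_ne h]

theorem los (M : Model) {ι : Type} (l : Ultrafilter ι) (φ : FOForm) :
    ∀ α : ℕ → ι → M.U,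
      Sat (upow M l) φ α ↔ ∀ᶠ i in (l : Filter ι), Sat M φ (fun v => α v i) := by
  induction φ with
  | falsum => intro α; simp [Sat, l.neBot.ne]
  | pred n v => intro α; rfl
  | rel s v w => intro α; cases s <;> rfl
  | conj f g hf hg => intro α; simp only [Sat, hf, hg, Filter.eventually_and]
  | disj f g hf hg => intro α; simp only [Sat, hf, hg, Ultrafilter.eventually_or]
  | impl f g hf hg => intro α; simp only [Sat, hf, hg, Ultrafilter.eventually_imp]
  | all v f hf =>
    intro α
    simp only [Sat]
    constructor
    · intro h
      by_contra hc
      rw [← Ultrafilter.eventually_not] at hc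
      have : ∀ i, ∃ u : M.U, (¬ ∀ u, Sat M f (Function.update (fun w => α w i) v u)) →
          ¬ Sat M f (Function.update (fun w => α w i) v u) := by
        intro i
        by_cases hi : ∀ u, Sat M f (Function.update (fun w => α w i) v u)
        · exact ⟨α 0 i, fun h => (h hi).elim⟩
        · obtain ⟨u, hu⟩ := not_forall.mp hi
          exact ⟨u, fun _ => hu⟩
      choose u hu using this
      have h' := (hf _).mp (h u)
      obtain ⟨i, hi1, hi2⟩ := (hc.and h').exists
      refine hu i hi1 ?_
      rw [← update_eval α v u i]
      exact hi2
    · intro h (u : ι → M.U)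
      refine (hf _).mpr (h.mono fun i hi => ?_)
      have := hi (u i)
      rw [← update_eval α v u i] at this
      exact this
  | ex v f hf =>
    intro α
    simp only [Sat]
    constructor
    · rintro ⟨(u : ι → M.U), hu⟩
      refine ((hf _).mp hu).mono fun i hi => ⟨u i, ?_⟩
      rw [← update_eval α v u i]
      exact hi
    · intro h
      have : ∀ i, ∃ u : M.U, (∃ u, Sat M f (Function.update (fun w => α w i) v u)) →
          Sat M f (Function.update (fun w => α w i) v u) := by
        intro i
        by_cases hi : ∃ u, Sat M f (Function.update (fun w => α w i) v u)
        · obtain ⟨u, hu⟩ := hi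
          exact ⟨u, fun _ => hu⟩
        · exact ⟨α 0 i, fun h => (hi h).elim⟩
      choose u hu using this
      refine ⟨u, (hf _).mpr (h.mono fun i hi => ?_)⟩
      have := hu i hi
      rw [← update_eval α v u i] at this
      exact this

theorem realize {M : Model} (hM : OmegaSaturated M) (n : ℕ) (α : ℕ → M.U) {J : Type}
    (Γ : J → FOForm) (k : ℕ) (hk : ∀ j, (Γ j).freeVars ⊆ Finset.range (n + k))
    (hfin : ∀ F : Finset J, ∃ α' : ℕ → M.U, (∀ i < n, α' i = α i) ∧ ∀ j ∈ F, Sat M (Γ j) α') :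
    ∃ α' : ℕ → M.U, (∀ i < n, α' i = α i) ∧ ∀ j, Sat M (Γ j) α' := by
  classical
  choose A hA1 hA2 using hfin
  let l : Ultrafilter (Finset J) := Ultrafilter.of Filter.atTop
  have hl : (l : Filter (Finset J)) ≤ Filter.atTop := Ultrafilter.of_le _
  obtain ⟨α', h1, h2⟩ := hM n α (Set.range Γ) ⟨k, by rintro _ ⟨j, rfl⟩; exact hk j⟩
    ⟨upow M l, fun v F => A F v, by
      intro ψ hψ hs
      rw [los]
      refine Filter.Eventually.of_forall fun F => ?_
      refine (sat_congr M ψ _ _ fun v hv => ?_).mp hs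
      exact (hA1 F v (Finset.mem_range.mp (hψ hv))).symm, by
      rintro _ ⟨j, rfl⟩
      rw [los]
      have : ∀ᶠ F in (Filter.atTop : Filter (Finset J)), {j} ≤ F := Filter.eventually_ge_atTop {j}
      refine (this.filter_mono hl).mono fun F hF => ?_
      exact hA2 F j (hF (Finset.mem_singleton_self j))⟩
  exact ⟨α', h1, fun j => h2 _ ⟨j, rfl⟩⟩

/-- Kripke-style forcing for the (2,1) clauses. -/
def Force (M : Model) : MForm → M.U → Prop
  | .bot, _ => False
  | .prop n, a => M.pred n a
  | .conj I J, a => Force M I a ∧ Force M J a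
  | .disj I J, a => Force M I a ∨ Force M J a
  | .impl I J, a => ∀ c, M.rel a c → Force M I c → Force M J c
  | .box I, a => ∀ c, M.rel a c → ∀ e, M.relBox c e → Force M I e
  | .diam I, a => ∃ c, M.relDiam a c ∧ Force M I c

/-- Propositional letters of a modal formula. -/
def MForm.letters : MForm → Finset ℕ
  | .bot => ∅
  | .prop n => {n}
  | .conj I J => I.letters ∪ J.letters
  | .disj I J => I.letters ∪ J.letters
  | .impl I J => I.letters ∪ J.letters
  | .box I => I.letters
  | .diam I => I.letters

theorem predLetters_ST (I : MForm) : ∀ x, (ST false true I x).predLetters = I.letters := by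
  induction I with
  | bot => intro x; rfl
  | prop n => intro x; rfl
  | conj I J hI hJ => intro x; simp [ST, FOForm.predLetters, MForm.letters, hI, hJ]
  | disj I J hI hJ => intro x; simp [ST, FOForm.predLetters, MForm.letters, hI, hJ]
  | impl I J hI hJ => intro x; simp [ST, FOForm.predLetters, MForm.letters, hI, hJ]
  | box I hI => intro x; simp [ST, FOForm.predLetters, MForm.letters, hI]
  | diam I hI => intro x; simp [ST, FOForm.predLetters, MForm.letters, hI]

theorem freeVars_ST (I : MForm) : ∀ x, (ST false true I x).freeVars ⊆ {x} := by
  induction I with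
  | bot => intro x; simp [ST, FOForm.freeVars]
  | prop n => intro x; simp [ST, FOForm.freeVars]
  | conj I J hI hJ => intro x; exact Finset.union_subset (hI x) (hJ x)
  | disj I J hI hJ => intro x; exact Finset.union_subset (hI x) (hJ x)
  | impl I J hI hJ =>
    intro x v hv
    have h1 := @hI (x + 1) v
    have h2 := @hJ (x + 1) v
    simp [ST, FOForm.freeVars] at *
    grind
  | box I hI =>
    intro x v hv
    have h1 := @hI (x + 2) v
    simp [ST, FOForm.freeVars] at *
    grind
  | diam I hI =>
    intro x v hv
    have h1 := @hI (x + 1) v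
    simp [ST, FOForm.freeVars] at *
    grind

theorem sat_ST (M : Model) (I : MForm) :
    ∀ (x : ℕ) (α : ℕ → M.U), Sat M (ST false true I x) α ↔ Force M I (α x) := by
  induction I with
  | bot => intro x α; rfl
  | prop n => intro x α; rfl
  | conj I J hI hJ => intro x α; simp only [ST, Sat, Force, hI, hJ]
  | disj I J hI hJ => intro x α; simp only [ST, Sat, Force, hI, hJ]
  | impl I J hI hJ => intro x α; simp [ST, Sat, Force, hI, hJ, Model.relOf]
  | box I hI =>
    intro x α
    simp [ST, Sat, Force, hI, Model.relOf]
  | diam I hI => intro x α; simp [ST, Sat, Force, hI, Model.relOf]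

theorem satAt_ST (M : Model) (a : M.U) (x : ℕ) (I : MForm) :
    SatAt M a x (ST false true I x) ↔ Force M I a := by
  constructor
  · intro h
    exact (sat_ST M I x (fun _ => a)).mp (h _ rfl)
  · rintro h α rfl
    exact (sat_ST M I x α).mpr h

theorem tpX_subset_iff (Θ : Set ℕ) (x : ℕ) (N P : Model) (a : N.U) (b : P.U) :
    tpX Θ false true x N a ⊆ tpX Θ false true x P b ↔
      ∀ I : MForm, (I.letters : Set ℕ) ⊆ Θ → Force N I a → Force P I b := by
  constructor
  · intro h I hI ha
    have := @h (ST false true I x)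
      ⟨⟨⟨I, rfl⟩, by rw [predLetters_ST]; exact hI⟩, (satAt_ST N a x I).mpr ha⟩
    exact (satAt_ST P b x I).mp this.2
  · rintro h _ ⟨⟨⟨I, rfl⟩, hI⟩, ha⟩
    refine ⟨⟨⟨I, rfl⟩, hI⟩, ?_⟩
    rw [predLetters_ST] at hI
    exact (satAt_ST P b x I).mpr (h I hI ((satAt_ST N a x I).mp ha))

theorem exists_conj (Θ : Set ℕ) (F : Finset MForm) (hF : ∀ I ∈ F, (I.letters : Set ℕ) ⊆ Θ) :
    ∃ C : MForm, (C.letters : Set ℕ) ⊆ Θ ∧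
      ∀ (M : Model) (a : M.U), Force M C a ↔ ∀ I ∈ F, Force M I a := by
  classical
  induction F using Finset.induction_on with
  | empty => exact ⟨.impl .bot .bot, by simp [MForm.letters], by simp [Force]⟩
  | insert I F _ ih =>
    obtain ⟨C, hC, hs⟩ := ih fun J hJ => hF J (Finset.mem_insert_of_mem hJ)
    refine ⟨.conj I C, ?_, fun M a => ?_⟩
    · simp only [MForm.letters, Finset.coe_union]
      exact Set.union_subset (hF I (Finset.mem_insert_self _ _)) hC
    · simp [Force, hs]

theorem exists_disj (Θ : Set ℕ) (F : Finset MForm) (hF : ∀ I ∈ F, (I.letters : Set ℕ) ⊆ Θ) :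
    ∃ C : MForm, (C.letters : Set ℕ) ⊆ Θ ∧
      ∀ (M : Model) (a : M.U), Force M C a ↔ ∃ I ∈ F, Force M I a := by
  classical
  induction F using Finset.induction_on with
  | empty => exact ⟨.bot, by simp [MForm.letters], by simp [Force]⟩
  | insert I F _ ih =>
    obtain ⟨C, hC, hs⟩ := ih fun J hJ => hF J (Finset.mem_insert_of_mem hJ)
    refine ⟨.disj I C, ?_, fun M a => ?_⟩
    · simp only [MForm.letters, Finset.coe_union]
      exact Set.union_subset (hF I (Finset.mem_insert_self _ _)) hC
    · simp [Force, hs]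

/-- The relation in semantic form. -/
def Sub (Θ : Set ℕ) (N P : Model) (a : N.U) (b : P.U) : Prop :=
  ∀ I : MForm, (I.letters : Set ℕ) ⊆ Θ → Force N I a → Force P I b

theorem freeVars_ST_range (I : MForm) {x m : ℕ} (h : x < m) :
    (ST false true I x).freeVars ⊆ Finset.range m := fun v hv => by
  have := Finset.mem_singleton.mp (freeVars_ST I x hv)
  simp; omega

theorem step_lemma (Θ : Set ℕ) (N P : Model) (hN : OmegaSaturated N) (a : N.U) (b d : P.U)
    (h : Sub Θ N P a b) (hbd : P.rel b d) :
    ∃ c : N.U, N.rel a c ∧ Sub Θ N P c d ∧ Sub Θ P N d c := by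
  classical
  let Γ : {I : MForm // (I.letters : Set ℕ) ⊆ Θ} → FOForm := fun I =>
    .conj (.rel .r 0 1) (if Force P I.1 d then ST false true I.1 1
      else .impl (ST false true I.1 1) .falsum)
  have hΓ : ∀ I (α : ℕ → N.U), Sat N (Γ I) α ↔
      N.rel (α 0) (α 1) ∧ (Force N I.1 (α 1) ↔ Force P I.1 d) := by
    intro I α
    by_cases hd : Force P I.1 d <;> simp [Γ, hd, Sat, Model.relOf, sat_ST]
  obtain ⟨α', h0, hα⟩ := realize hN 1 (fun _ => a) Γ 1 (by
      intro I
      have := freeVars_ST_range I.1 (show 1 < 2 by omega)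
      refine Finset.union_subset (by intro v; simp [FOForm.freeVars]; omega) ?_
      split_ifs
      · exact this
      · exact Finset.union_subset this (by simp [FOForm.freeVars])) (by
      intro F
      let F' := F.image Subtype.val
      have hF' : ∀ I ∈ F', (I.letters : Set ℕ) ⊆ Θ := by
        intro I hI
        obtain ⟨J, _, rfl⟩ := Finset.mem_image.mp hI
        exact J.2
      obtain ⟨C, hC, hCs⟩ := exists_conj Θ (F'.filter fun I => Force P I d)
        fun I hI => hF' I (Finset.mem_filter.mp hI).1
      obtain ⟨D, hD, hDs⟩ := exists_disj Θ (F'.filter fun I => ¬ Force P I d)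
        fun I hI => hF' I (Finset.mem_filter.mp hI).1
      have hb : ¬ Force P (.impl C D) b := by
        intro hb
        obtain ⟨I, hI, hId⟩ := (hDs P d).mp (hb d hbd ((hCs P d).mpr
          fun I hI => (Finset.mem_filter.mp hI).2))
        exact (Finset.mem_filter.mp hI).2 hId
      have ha : ¬ Force N (.impl C D) a := fun ha => hb (h _ (by
        simp only [MForm.letters, Finset.coe_union]
        exact Set.union_subset hC hD) ha)
      simp only [Force, not_forall] at ha
      obtain ⟨c, hac, hc, hnc⟩ := ha
      rw [hCs] at hc
      rw [hDs] at hnc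
      refine ⟨fun i => if i = 0 then a else c, ?_, ?_⟩
      · intro i hi
        have : i = 0 := by omega
        simp [this]
      · intro I hI
        rw [hΓ]
        refine ⟨by simpa using hac, ?_⟩
        have hIm : I.1 ∈ F' := Finset.mem_image_of_mem _ hI
        simp only [one_ne_zero, if_false]
        constructor
        · intro hI1
          by_contra hd
          exact hnc ⟨I.1, Finset.mem_filter.mpr ⟨hIm, hd⟩, hI1⟩
        · intro hd
          exact hc I.1 (Finset.mem_filter.mpr ⟨hIm, hd⟩))
  simp only [hΓ, h0 0 one_pos] at hα
  refine ⟨α' 1, (hα ⟨.bot, by simp [MForm.letters]⟩).1, ?_, ?_⟩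
  · intro I hI hc
    exact (hα ⟨I, hI⟩).2.mp hc
  · intro I hI hc
    exact (hα ⟨I, hI⟩).2.mpr hc

theorem box_lemma (Θ : Set ℕ) (N P : Model) (hN : OmegaSaturated N) (a : N.U) (b d f : P.U)
    (h : Sub Θ N P a b) (hbd : P.rel b d) (hdf : P.relBox d f) :
    ∃ c e : N.U, N.rel a c ∧ N.relBox c e ∧ Sub Θ N P e f := by
  classical
  let Γ : {I : MForm // (I.letters : Set ℕ) ⊆ Θ ∧ ¬ Force P I f} → FOForm := fun I =>
    .conj (.rel .r 0 1) (.conj (.rel .box 1 2) (.impl (ST false true I.1 2) .falsum))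
  have hΓ : ∀ I (α : ℕ → N.U), Sat N (Γ I) α ↔
      N.rel (α 0) (α 1) ∧ N.relBox (α 1) (α 2) ∧ ¬ Force N I.1 (α 2) := by
    intro I α
    simp [Γ, Sat, Model.relOf, sat_ST]
  obtain ⟨α', h0, hα⟩ := realize hN 1 (fun _ => a) Γ 2 (by
      intro I
      have := freeVars_ST_range I.1 (show 2 < 3 by omega)
      refine Finset.union_subset (by intro v; simp [FOForm.freeVars]; omega)
        (Finset.union_subset (by intro v; simp [FOForm.freeVars]; omega) ?_)
      exact Finset.union_subset this (by simp [FOForm.freeVars])) (by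
      intro F
      obtain ⟨D, hD, hDs⟩ := exists_disj Θ (F.image Subtype.val) (by
        intro I hI
        obtain ⟨J, _, rfl⟩ := Finset.mem_image.mp hI
        exact J.2.1)
      have hb : ¬ Force P (.box D) b := by
        intro hb
        obtain ⟨I, hI, hId⟩ := (hDs P f).mp (hb d hbd f hdf)
        obtain ⟨J, _, rfl⟩ := Finset.mem_image.mp hI
        exact J.2.2 hId
      have ha : ¬ Force N (.box D) a := fun ha => hb (h _ hD ha)
      simp only [Force, not_forall] at ha
      obtain ⟨c, hac, e, hce, hne⟩ := ha
      rw [hDs] at hne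
      refine ⟨fun i => if i = 0 then a else if i = 1 then c else e, ?_, ?_⟩
      · intro i hi
        have : i = 0 := by omega
        simp [this]
      · intro I hI
        rw [hΓ]
        refine ⟨by simpa using hac, by simpa using hce, ?_⟩
        intro hI1
        exact hne ⟨I.1, Finset.mem_image_of_mem _ hI, by simpa using hI1⟩)
  simp only [hΓ, h0 0 one_pos] at hα
  have hbot := hα ⟨.bot, by simp [MForm.letters], by simp [Force]⟩
  refine ⟨α' 1, α' 2, hbot.1, hbot.2.1, ?_⟩
  intro I hI hc
  by_contra hf
  exact (hα ⟨I, hI, hf⟩).2.2 hc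

theorem diam_lemma (Θ : Set ℕ) (N P : Model) (hP : OmegaSaturated P) (a c : N.U) (b : P.U)
    (h : Sub Θ N P a b) (hac : N.relDiam a c) :
    ∃ d : P.U, P.relDiam b d ∧ Sub Θ N P c d := by
  classical
  let Γ : {I : MForm // (I.letters : Set ℕ) ⊆ Θ ∧ Force N I c} → FOForm := fun I =>
    .conj (.rel .diam 0 1) (ST false true I.1 1)
  have hΓ : ∀ I (α : ℕ → P.U), Sat P (Γ I) α ↔
      P.relDiam (α 0) (α 1) ∧ Force P I.1 (α 1) := by
    intro I α
    simp [Γ, Sat, Model.relOf, sat_ST]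
  obtain ⟨α', h0, hα⟩ := realize hP 1 (fun _ => b) Γ 1 (by
      intro I
      exact Finset.union_subset (by intro v; simp [FOForm.freeVars]; omega)
        (freeVars_ST_range I.1 (show 1 < 2 by omega))) (by
      intro F
      obtain ⟨C, hC, hCs⟩ := exists_conj Θ (F.image Subtype.val) (by
        intro I hI
        obtain ⟨J, _, rfl⟩ := Finset.mem_image.mp hI
        exact J.2.1)
      have ha : Force N (.diam C) a := by
        refine ⟨c, hac, (hCs N c).mpr fun I hI => ?_⟩
        obtain ⟨J, _, rfl⟩ := Finset.mem_image.mp hI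
        exact J.2.2
      obtain ⟨d, hbd, hd⟩ := h (.diam C) hC ha
      rw [hCs] at hd
      refine ⟨fun i => if i = 0 then b else d, ?_, ?_⟩
      · intro i hi
        have : i = 0 := by omega
        simp [this]
      · intro I hI
        rw [hΓ]
        exact ⟨by simpa using hbd, by simpa using hd I.1 (Finset.mem_image_of_mem _ hI)⟩)
  simp only [hΓ, h0 0 one_pos] at hα
  refine ⟨α' 1, (hα ⟨.impl .bot .bot, by simp [MForm.letters], by simp [Force]⟩).1, ?_⟩
  intro I hI hc
  exact (hα ⟨I, hI, hc⟩).2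

/-- **Key Lemma 3 (case (2,1)).**  If M₁, M₂ are ω-saturated Θ-models and
tp_x(M₁,t) ⊆ tp_x(M₂,t') (types w.r.t. the (2,1)-standard translation), then
the relation A with a A b ⇔ tp_x(M_p,a) ⊆ tp_x(M_q,b) is a (2,1)-modal
⟨(M₁,t),(M₂,t')⟩-asimulation. -/
theorem statement_19 (Θ : Set ℕ) (M₁ M₂ : Model)
    (h1 : OmegaSaturated M₁) (h2 : OmegaSaturated M₂) (x : ℕ)
    (t : M₁.U) (t' : M₂.U)
    (h : tpX Θ false true x M₁ t ⊆ tpX Θ false true x M₂ t') :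
    IsAsimD1 false Θ M₁ M₂ t t'
      (fun a b => tpX Θ false true x M₁ a ⊆ tpX Θ false true x M₂ b)
      (fun b a => tpX Θ false true x M₂ b ⊆ tpX Θ false true x M₁ a) := by
  refine ⟨h, ?_⟩
  simp only [tpX_subset_iff, Bool.false_eq_true, if_false]
  refine ⟨?_, ?_, ?_, ?_, ⟨?_, ?_⟩, ?_, ?_⟩
  · intro a b hab n hn ha
    exact hab (.prop n) (by simpa [MForm.letters] using hn) ha
  · intro a b hab n hn ha
    exact hab (.prop n) (by simpa [MForm.letters] using hn) ha
  · exact fun a b d hab hbd => step_lemma Θ M₁ M₂ h1 a b d hab hbd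
  · exact fun a b d hab hbd => step_lemma Θ M₂ M₁ h2 a b d hab hbd
  · exact fun a b d f hab hbd hdf => box_lemma Θ M₁ M₂ h1 a b d f hab hbd hdf
  · exact fun a b d f hab hbd hdf => box_lemma Θ M₂ M₁ h2 a b d f hab hbd hdf
  · exact fun a c b hab hac => diam_lemma Θ M₁ M₂ h2 a c b hab hac
  · exact fun a c b hab hac => diam_lemma Θ M₂ M₁ h1 a c b hab hac

end ModalIntAsim
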